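/- In the setting of the solvability of the range equation (ω ∈ ℝ^d nonresonant, f real analytic and 2π-periodic in each coordinate with mean f₀, g real analytic, g(c₀) = f₀, a := g'(c₀) ≠ 0), the solution u of the range equation can be chosen so that, in addition, for every fixed ζ with |ζ| < ζ̄ the map ε ↦ u(·, ε, ζ) is continuous from [0, ε̄) into the space of bounded continuous functions on ℝ^d with the supremum norm, with u(·, 0, ζ) = 0; in particular sup_{ψ∈ℝ^d} |u(ψ, ε, ζ)| → 0 as ε → 0⁺. -/

import Mathlib

open MeasureTheory Filter

/-!
Let `a = g'(c₀)`. On the torus, with `∂` the derivative along the flow `t ↦ t ω`, the linear part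
`ε (∂² + a) + ∂` of the equation factors as `ε (l₁ - ∂) (l₂ - ∂)` with real `l₁`, `l₂` of product
`a`. Each `(1 - l⁻¹ ∂)⁻¹` is an average of translates against `e⁻ˢ ds`, hence a contraction of
the continuous functions. So the solution operator on mean-free functions has norm at most `2 / |a|`
uniformly in `ε`, and no small divisor condition is needed. On a trigonometric monomial of frequency
`σ ≠ 0` it is multiplication by `ε / (iσ + ε (a - σ²))`, which is continuous in `ε` and vanishes
at `0`; by density it is strongly continuous in `ε`. The remainder `g (c₀ + x) - a x` has a
small Lipschitz constant near `0`, so that `u` is the fixed point of a contraction with a constant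
independent of `ε`, and `u` inherits smallness and continuity in `ε` from the solution operator.
-/

namespace RangeEquation

open scoped Pointwise Topology

section Superposition

lemma lipschitzWith_comp {K X Y : Type*} [TopologicalSpace K] [CompactSpace K] [MetricSpace X]
    [MetricSpace Y] {f : C(X, Y)} {k : NNReal} (hf : LipschitzWith k f) :
    LipschitzWith k fun v : C(K, X) => f.comp v :=
  LipschitzWith.of_dist_le_mul fun v w => (ContinuousMap.dist_le (by positivity)).2 fun θ =>
    (hf.dist_le_mul _ _).trans <| by gcongr; exact ContinuousMap.dist_apply_le_dist θ

lemma exists_eventuallyEq_norm_sub_le {K E : Type*} [TopologicalSpace K]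
    [NormedAddCommGroup E] [NormedSpace ℝ E] (w : C(K, E)) (θ₀ : K) {η : ℝ} (hη : 0 < η) :
    ∃ w' : C(K, E), (∀ᶠ θ in 𝓝 θ₀, w' θ = w θ) ∧ ∀ θ, ‖w' θ - w θ₀‖ ≤ η := by
  have max_pos (θ : K) : 0 < max η ‖w θ - w θ₀‖ := lt_max_of_lt_left hη
  refine ⟨⟨fun θ => w θ₀ + (η / max η ‖w θ - w θ₀‖) • (w θ - w θ₀), ?_⟩, ?_, fun θ => ?_⟩
  · have (θ : K) : max η ‖w θ - w θ₀‖ ≠ 0 := (max_pos θ).ne'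
    fun_prop (disch := assumption)
  · have hnear : ∀ᶠ θ in 𝓝 θ₀, ‖w θ - w θ₀‖ < η := by
      have : ContinuousAt (fun θ => ‖w θ - w θ₀‖) θ₀ := by fun_prop
      exact this.eventually_lt continuousAt_const (by simpa using hη)
    filter_upwards [hnear] with θ hθ
    simp [max_eq_left hθ.le, hη.ne']
  · rw [ContinuousMap.coe_mk, add_sub_cancel_left, norm_smul, Real.norm_of_nonneg (by positivity),
      div_mul_eq_mul_div, div_le_iff₀ (max_pos θ)]
    gcongr
    exact le_max_right _ _

variable {K E F : Type*} [TopologicalSpace K] [CompactSpace K] [NormedAddCommGroup E]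
  [NormedSpace ℝ E] [NormedAddCommGroup F] [NormedSpace ℝ F]

/-- The pointwise lift of a continuous multilinear map `q` to continuous functions on `K`:
`(v₁, …, vₙ) ↦ (θ ↦ q (v₁ θ, …, vₙ θ))`. These are the Taylor terms of a superposition
operator. -/
noncomputable def pointwiseMultilinear (K : Type*) [TopologicalSpace K] [CompactSpace K] {n : ℕ}
    (q : ContinuousMultilinearMap ℝ (fun _ : Fin n => E) F) :
    ContinuousMultilinearMap ℝ (fun _ : Fin n => C(K, E)) C(K, F) :=
  MultilinearMap.mkContinuous
    { toFun := fun v => ⟨fun θ => q fun i => v i θ, by fun_prop⟩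
      map_update_add' := fun v i x y => by
        ext θ
        have eval_update (z : C(K, E)) :
            (fun j => Function.update v i z j θ) = Function.update (fun j => v j θ) i (z θ) :=
          funext fun j => Function.apply_update (fun _ w => w θ) v i z j
        simp only [ContinuousMap.coe_mk, ContinuousMap.add_apply, eval_update, q.map_update_add]
      map_update_smul' := fun v i c x => by
        ext θ
        have eval_update (z : C(K, E)) :
            (fun j => Function.update v i z j θ) = Function.update (fun j => v j θ) i (z θ) :=
          funext fun j => Function.apply_update (fun _ w => w θ) v i z j
        simp only [ContinuousMap.coe_mk, ContinuousMap.smul_apply, eval_update,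
          q.map_update_smul] }
    ‖q‖ fun v => (ContinuousMap.norm_le _ (by positivity)).2 fun θ =>
      (q.le_opNorm _).trans <| by gcongr with i; exact (v i).norm_coe_le_norm θ

lemma norm_pointwiseMultilinear_le {n : ℕ}
    (q : ContinuousMultilinearMap ℝ (fun _ : Fin n => E) F) :
    ‖pointwiseMultilinear K q‖ ≤ ‖q‖ :=
  MultilinearMap.mkContinuous_norm_le _ (norm_nonneg _) _

/-- The pointwise lift of a formal power series to continuous functions on `K`. -/
noncomputable def pointwiseSeries (K : Type*) [TopologicalSpace K] [CompactSpace K]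
    (p : FormalMultilinearSeries ℝ E F) : FormalMultilinearSeries ℝ C(K, E) C(K, F) :=
  fun n => pointwiseMultilinear K (p n)

lemma radius_le_radius_pointwiseSeries (p : FormalMultilinearSeries ℝ E F) :
    p.radius ≤ (pointwiseSeries K p).radius := by
  refine ENNReal.le_of_forall_nnreal_lt fun s hs => ?_
  obtain ⟨C, -, hC⟩ := p.norm_mul_pow_le_of_lt_radius hs
  refine FormalMultilinearSeries.le_radius_of_bound _ C fun n => le_trans ?_ (hC n)
  gcongr
  exact norm_pointwiseMultilinear_le _

lemma hasFPowerSeriesOnBall_comp_const [CompleteSpace F] {f : C(E, F)}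
    {p : FormalMultilinearSeries ℝ E F} {x : E} {r : ENNReal}
    (hf : HasFPowerSeriesOnBall f p x r) :
    HasFPowerSeriesOnBall (fun v : C(K, E) => f.comp v) (pointwiseSeries K p)
      (ContinuousMap.const K x) r := by
  have hr : r ≤ (pointwiseSeries K p).radius :=
    hf.r_le.trans (radius_le_radius_pointwiseSeries p)
  refine ⟨hr, hf.r_pos, fun {y} hy => ?_⟩
  have hsum := ((pointwiseSeries K p).summable (Metric.eball_subset_eball hr hy)).hasSum
  convert hsum using 1
  ext θ
  have hyθ : y θ ∈ Metric.eball (0 : E) r := by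
    rw [mem_eball_zero_iff] at hy ⊢
    exact (enorm_le_iff_norm_le.2 (y.norm_coe_le_norm θ)).trans_lt hy
  exact (hf.hasSum hyθ).unique ((ContinuousMap.evalCLM ℝ θ : C(K, F) →L[ℝ] F).hasSum hsum)

lemma analyticAt_comp_of_norm_sub_le [CompleteSpace F] {f : C(E, F)}
    {p : FormalMultilinearSeries ℝ E F} {x : E} {r : ENNReal}
    (hf : HasFPowerSeriesOnBall f p x r) {w : C(K, E)} {η : ℝ} (hη : 0 ≤ η)
    (hηr : ENNReal.ofReal η < r) (hw : ∀ θ, ‖w θ - x‖ ≤ η) :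
    AnalyticAt ℝ (fun v : C(K, E) => f.comp v) w := by
  refine (hasFPowerSeriesOnBall_comp_const hf).analyticAt_of_mem ?_
  rw [Metric.mem_eball, edist_eq_enorm_sub, ← ofReal_norm]
  exact (ENNReal.ofReal_le_ofReal ((ContinuousMap.norm_le _ hη).2 hw)).trans_lt hηr

lemma analyticAt_of_locally_eq [T2Space K] {Φ : E → C(K, ℝ)} {x : E}
    (h : ∀ θ₀, ∃ Ψ : E → C(K, ℝ), AnalyticAt ℝ Ψ x ∧ ∀ᶠ θ in 𝓝 θ₀, ∀ y, Φ y θ = Ψ y θ) :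
    AnalyticAt ℝ Φ x := by
  choose Ψ hΨ hΦΨ using h
  obtain ⟨t, -, ht⟩ := isCompact_univ.elim_nhds_subcover _
    fun θ _ => interior_mem_nhds.2 (hΦΨ θ)
  obtain ⟨ρ, hρ⟩ := PartitionOfUnity.exists_isSubordinate isClosed_univ
    (fun i : t => interior {θ | ∀ y, Φ y θ = Ψ i y θ}) (fun _ => isOpen_interior)
    (by simpa [Set.iUnion_subtype] using ht)
  have glue : Φ = fun y => ∑ i, ρ i * Ψ i y := by
    ext y θ
    have term_eq (i : t) : ρ i θ * Ψ i y θ = ρ i θ * Φ y θ := by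
      by_cases hi : ρ i θ = 0
      · rw [hi, zero_mul, zero_mul]
      · have := interior_subset (hρ i (subset_tsupport _ hi))
        rw [this y]
    have sum_one : ∑ i, ρ i θ = 1 := by
      rw [← finsum_eq_sum_of_fintype]
      exact ρ.sum_eq_one (Set.mem_univ θ)
    simp only [ContinuousMap.sum_apply, ContinuousMap.mul_apply, term_eq, ← Finset.sum_mul, sum_one,
      one_mul]
  rw [glue]
  exact Finset.analyticAt_fun_sum _ fun i _ => analyticAt_const.mul (hΨ i)

lemma analyticAt_comp [T2Space K] {f : C(E, ℝ)} {w : C(K, E)}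
    (hf : ∀ θ, AnalyticAt ℝ f (w θ)) : AnalyticAt ℝ (fun v : C(K, E) => f.comp v) w := by
  refine analyticAt_of_locally_eq fun θ₀ => ?_
  obtain ⟨p, r, hp⟩ := hf θ₀
  obtain ⟨η, hη, hηr⟩ := ENNReal.lt_iff_exists_real_btwn.1 hp.r_pos
  obtain ⟨w', hw', hw'η⟩ := exists_eventuallyEq_norm_sub_le w θ₀ (ENNReal.ofReal_pos.1 hηr.1)
  refine ⟨fun v => f.comp (w' + (v - w)), ?_, ?_⟩
  · refine (analyticAt_comp_of_norm_sub_le (w := w' + (w - w)) hp hη hηr.2 ?_).comp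
      (g := fun v : C(K, E) => f.comp v) (f := fun v => w' + (v - w)) (by fun_prop)
    simpa using hw'η
  · filter_upwards [hw'] with θ hθ v
    simp [hθ]

end Superposition

section Torus

variable {ι : Type*}

/-- The covering map of the torus by `ι → ℝ`, with period `2π` in each coordinate. Mathlib's torus
has period `1`, whence the division. -/
noncomputable def torusProj (ι : Type*) : (ι → ℝ) →ₜ+ UnitAddTorus ι where
  toFun ψ i := ((ψ i / (2 * Real.pi) : ℝ) : UnitAddCircle)
  map_zero' := by ext i; simp
  map_add' ψ φ := by ext i; simp [add_div]
  continuous_toFun := continuous_pi fun i =>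
    (AddCircle.continuous_mk' 1).comp ((continuous_apply i).div_const _)

lemma torusProj_apply (ψ : ι → ℝ) (i : ι) :
    torusProj ι ψ i = ((ψ i / (2 * Real.pi) : ℝ) : UnitAddCircle) := rfl

/-- Division by `2π` on the real line. -/
noncomputable def divTwoPi : ℝ ≃ₜ ℝ := Homeomorph.mulRight₀ (2 * Real.pi)⁻¹ (by positivity)

lemma isOpenQuotientMap_torusProj : IsOpenQuotientMap (torusProj ι) :=
  IsOpenQuotientMap.piMap fun _ : ι =>
    (QuotientAddGroup.isOpenQuotientMap_mk (N := AddSubgroup.zmultiples (1 : ℝ))).comp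
      divTwoPi.isOpenQuotientMap

lemma torusProj_add_single [DecidableEq ι] (ψ : ι → ℝ) (i : ι) :
    torusProj ι (ψ + Pi.single i (2 * Real.pi)) = torusProj ι ψ := by
  have : torusProj ι (Pi.single i (2 * Real.pi)) = 0 := by
    ext j
    obtain rfl | hij := eq_or_ne j i
    · simp [torusProj_apply]
    · simp [torusProj_apply, hij]
  rw [map_add, this, add_zero]

lemma exists_eq_add_sum_of_torusProj_eq [Fintype ι] [DecidableEq ι] {ψ φ : ι → ℝ}
    (h : torusProj ι ψ = torusProj ι φ) :
    ∃ k : ι → ℤ, ψ = φ + ∑ i, k i • Pi.single i (2 * Real.pi) := by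
  have hcoord (i : ι) : ∃ k : ℤ, ψ i = φ i + k * (2 * Real.pi) := by
    have hdiff : (((ψ i - φ i) / (2 * Real.pi) : ℝ) : UnitAddCircle) = 0 := by
      rw [sub_div, AddCircle.coe_sub, sub_eq_zero]
      exact congrFun h i
    obtain ⟨k, hk⟩ := (AddCircle.coe_eq_zero_iff 1).1 hdiff
    rw [zsmul_one, eq_div_iff Real.two_pi_pos.ne'] at hk
    exact ⟨k, by linarith⟩
  choose k hk using hcoord
  refine ⟨k, funext fun i => ?_⟩
  simp [hk i, Finset.sum_apply, Pi.single_apply]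

lemma eq_of_torusProj_eq [Finite ι] [DecidableEq ι] {Y : Type*} {f : (ι → ℝ) → Y}
    (hf : ∀ ψ i, f (ψ + Pi.single i (2 * Real.pi)) = f ψ) {ψ φ : ι → ℝ}
    (h : torusProj ι ψ = torusProj ι φ) : f ψ = f φ := by
  let periods : AddSubgroup (ι → ℝ) :=
    { carrier := {v | Function.Periodic f v}
      zero_mem' := fun x => by rw [add_zero]
      add_mem' := Function.Periodic.add_period
      neg_mem' := Function.Periodic.neg }
  cases nonempty_fintype ι
  obtain ⟨k, rfl⟩ := exists_eq_add_sum_of_torusProj_eq h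
  have : ∑ i, k i • Pi.single i (2 * Real.pi) ∈ periods :=
    periods.sum_mem fun i _ => periods.zsmul_mem (fun ψ => hf ψ i) _
  exact this φ

lemma exists_torus_lift [Finite ι] [DecidableEq ι] {Y : Type*} [TopologicalSpace Y]
    {f : (ι → ℝ) → Y} (hf : Continuous f)
    (hper : ∀ ψ i, f (ψ + Pi.single i (2 * Real.pi)) = f ψ) :
    ∃ F : C(UnitAddTorus ι, Y), ∀ ψ, F (torusProj ι ψ) = f ψ := by
  have hquot : Topology.IsQuotientMap (torusProj ι : C(ι → ℝ, UnitAddTorus ι)) :=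
    isOpenQuotientMap_torusProj.isQuotientMap
  have hfact : Function.FactorsThrough f (torusProj ι) := fun _ _ => eq_of_torusProj_eq hper
  exact ⟨hquot.lift ⟨f, hf⟩ hfact, DFunLike.congr_fun (hquot.lift_comp ⟨f, hf⟩ hfact)⟩

lemma exists_continuous_local_section.{u, v} {K : Type u} {X : Type v} [TopologicalSpace K]
    [NormalSpace K] [RegularSpace K] [TopologicalSpace X] [TietzeExtension.{u, v} X] {p : X → K}
    (hp : IsLocalHomeomorph p) (x : X) :
    ∃ s : C(K, X), ∀ᶠ θ in 𝓝 (p x), p (s θ) = θ := by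
  obtain ⟨e, hx, rfl⟩ := hp x
  obtain ⟨V, hV, hVc, hVe⟩ := exists_mem_nhds_isClosed_subset
    (e.open_target.mem_nhds (e.map_source hx))
  obtain ⟨s, hs⟩ := ContinuousMap.exists_restrict_eq hVc
    ⟨V.domRestrict e.symm, (e.continuousOn_symm.mono hVe).domRestrict⟩
  refine ⟨s, ?_⟩
  filter_upwards [hV] with θ hθ
  have : s θ = e.symm θ := DFunLike.congr_fun hs ⟨θ, hθ⟩
  rw [this, e.right_inv (hVe hθ)]

lemma exists_torusProj_local_section [Finite ι] (θ₀ : UnitAddTorus ι) :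
    ∃ s : C(UnitAddTorus ι, ι → ℝ), ∀ᶠ θ in 𝓝 θ₀, torusProj ι (s θ) = θ := by
  have hcoord (i : ι) : ∃ s : C(UnitAddCircle, ℝ),
      ∀ᶠ α in 𝓝 (θ₀ i), ((divTwoPi (s α) : ℝ) : UnitAddCircle) = α := by
    obtain ⟨t, ht⟩ := QuotientAddGroup.mk_surjective (θ₀ i)
    have := exists_continuous_local_section ((AddCircle.isLocalHomeomorph_coe (1 : ℝ)).comp
      divTwoPi.isLocalHomeomorph) (divTwoPi.symm t)
    simpa [← ht] using this
  choose s hs using hcoord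
  refine ⟨⟨fun θ i => s i (θ i), by fun_prop⟩, ?_⟩
  filter_upwards [eventually_all.2 fun i => (continuous_apply i).continuousAt.eventually (hs i)]
    with θ hθ using funext hθ

lemma analyticAt_translate [Fintype ι] {F : C(UnitAddTorus ι, ℝ)}
    (hF : ∀ ψ, AnalyticAt ℝ (fun φ => F (torusProj ι φ)) ψ) (ψ₀ : ι → ℝ) :
    AnalyticAt ℝ (fun ψ => F.comp (ContinuousMap.addRight (torusProj ι ψ))) ψ₀ := by
  refine analyticAt_of_locally_eq fun θ₀ => ?_
  obtain ⟨s, hs⟩ := exists_torusProj_local_section θ₀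
  let shift (ψ : ι → ℝ) : C(UnitAddTorus ι, ι → ℝ) := s + ContinuousLinearMap.const ℝ _ ψ
  have hshift : AnalyticAt ℝ shift ψ₀ :=
    analyticAt_const.add (ContinuousLinearMap.analyticAt _ _)
  have hsuper := analyticAt_comp (f := F.comp (torusProj ι : C(ι → ℝ, UnitAddTorus ι)))
    (w := shift ψ₀) fun θ => hF _
  refine ⟨_, hsuper.comp hshift, ?_⟩
  filter_upwards [hs] with θ hθ ψ
  simp [shift, map_add, hθ]

/-- The Haar probability measure of the torus. -/
noncomputable abbrev torusHaar (ι : Type*) [Fintype ι] : Measure (UnitAddTorus ι) :=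
  Measure.pi fun _ => AddCircle.haarAddCircle

lemma integral_torusHaar [Fintype ι] {E : Type*} [NormedAddCommGroup E] [NormedSpace ℝ E]
    (h : UnitAddTorus ι → E) :
    ∫ θ, h θ ∂torusHaar ι = ((2 * Real.pi) ^ Fintype.card ι)⁻¹ •
      ∫ ψ in Set.Icc (0 : ι → ℝ) (fun _ => 2 * Real.pi), h (torusProj ι ψ) := by
  have torusProj_smul (x : ι → ℝ) :
      torusProj ι ((2 * Real.pi) • x) = fun i => (x i : UnitAddCircle) := by
    ext i
    simp [torusProj_apply]
  have scale_box : (2 * Real.pi) • {x : ι → ℝ | ∀ i, x i ∈ Set.Ioc (0 : ℝ) (0 + 1)} =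
      Set.univ.pi fun _ => Set.Ioc 0 (2 * Real.pi) := by
    ext ψ
    rw [Set.mem_smul_set_iff_inv_smul_mem₀ Real.two_pi_pos.ne', Set.mem_univ_pi]
    refine forall_congr' fun i => ?_
    rw [Pi.smul_apply, smul_eq_mul, Set.mem_Ioc, Set.mem_Ioc, zero_add,
      mul_pos_iff_of_pos_left (inv_pos.2 Real.two_pi_pos), inv_mul_le_iff₀ Real.two_pi_pos, mul_one]
  calc ∫ θ, h θ ∂torusHaar ι
      = ∫ x in {x : ι → ℝ | ∀ i, x i ∈ Set.Ioc (0 : ℝ) (0 + 1)},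
          h (torusProj ι ((2 * Real.pi) • x)) := by
        simp_rw [torusProj_smul]
        exact UnitAddTorus.integral_preimage h 0
    _ = _ := by
        rw [Measure.setIntegral_comp_smul_of_pos volume (fun ψ => h (torusProj ι ψ)) _
          Real.two_pi_pos, scale_box, Module.finrank_fintype_fun_eq_card]
        congr 1
        exact setIntegral_congr_set Measure.univ_pi_Ioc_ae_eq_Icc

end Torus

section Averaging

variable {K F G : Type*} [TopologicalSpace K] [AddCommGroup K] [IsTopologicalAddGroup K]
  [NormedAddCommGroup F] [NormedSpace ℝ F] [NormedAddCommGroup G] [NormedSpace ℝ G]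

lemma continuous_translate {Y : Type*} [TopologicalSpace Y] (h : C(K, Y)) :
    Continuous fun τ => h.comp (ContinuousMap.addRight τ) :=
  (ContinuousMap.curry ⟨fun q : K × K => h (q.2 + q.1), by fun_prop⟩).continuous

variable [CompactSpace K]

lemma norm_translate_le {F : Type*} [NormedAddCommGroup F] (h : C(K, F)) (τ : K) :
    ‖h.comp (ContinuousMap.addRight τ)‖ ≤ ‖h‖ :=
  (ContinuousMap.norm_le _ (norm_nonneg _)).2 fun _ => h.norm_coe_le_norm _

lemma integrableOn_exp_neg_smul {E : Type*} [NormedAddCommGroup E] [NormedSpace ℝ E] {q : ℝ → E}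
    (hq : Continuous q) {C : ℝ} (hC : ∀ s, ‖q s‖ ≤ C) (t : ℝ) :
    IntegrableOn (fun s => Real.exp (-s) • q s) (Set.Ioi t) :=
  (integrableOn_exp_neg_Ioi t).smul_bdd C hq.aestronglyMeasurable (ae_of_all _ hC)

lemma hasDerivAt_integral_exp_neg_smul {E : Type*} [NormedAddCommGroup E] [NormedSpace ℝ E]
    [CompleteSpace E] {q : ℝ → E} (hq : Continuous q) {C : ℝ} (hC : ∀ s, ‖q s‖ ≤ C) (t : ℝ) :
    HasDerivAt (fun t => ∫ s in Set.Ioi 0, Real.exp (-s) • q (t + s))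
      ((∫ s in Set.Ioi 0, Real.exp (-s) • q (t + s)) - q t) t := by
  have hint := integrableOn_exp_neg_smul hq hC
  have hcont : Continuous fun s => Real.exp (-s) • q s := by fun_prop
  have shift (t : ℝ) : ∫ s in Set.Ioi 0, Real.exp (-s) • q (t + s) =
      Real.exp t • ((∫ s in Set.Ioi 0, Real.exp (-s) • q s) -
        ∫ s in (0 : ℝ)..t, Real.exp (-s) • q s) := by
    have hsub := (measurePreserving_add_left volume t).setIntegral_preimage_emb
      (measurableEmbedding_addLeft t) (fun s => Real.exp (-s) • q s) (Set.Ioi t)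
    rw [Set.preimage_const_add_Ioi, sub_self] at hsub
    rw [← intervalIntegral.integral_Ioi_sub_Ioi' (hint 0) (hint t), sub_sub_cancel, ← hsub,
      ← integral_smul]
    simp_rw [smul_smul, ← Real.exp_add]
    congr! 4 with s
    ring_nf
  have hprim : HasDerivAt (fun t => ∫ s in (0 : ℝ)..t, Real.exp (-s) • q s)
      (Real.exp (-t) • q t) t :=
    hcont.integral_hasStrictDerivAt 0 t |>.hasDerivAt
  rw [funext shift]
  refine ((Real.hasDerivAt_exp t).smul (hprim.const_sub _)).congr_deriv ?_
  rw [shift t, smul_neg, smul_smul, ← Real.exp_add, add_neg_cancel, Real.exp_zero, one_smul]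
  abel

lemma integrable_exp_neg_smul_translate (γ : ℝ →ₜ+ K) (k : ℝ) (h : C(K, F)) :
    IntegrableOn (fun s => Real.exp (-s) • h.comp (ContinuousMap.addRight (γ (k * s))))
      (Set.Ioi 0) :=
  integrableOn_exp_neg_smul ((continuous_translate h).comp (by fun_prop))
    (fun _ => norm_translate_le h _) 0

lemma norm_integral_exp_neg_smul_translate_le (γ : ℝ →ₜ+ K) (k : ℝ) (h : C(K, F)) :
    ‖∫ s in Set.Ioi 0, Real.exp (-s) • h.comp (ContinuousMap.addRight (γ (k * s)))‖ ≤ ‖h‖ := calc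
  ‖∫ s in Set.Ioi 0, Real.exp (-s) • h.comp (ContinuousMap.addRight (γ (k * s)))‖
    ≤ ∫ s in Set.Ioi 0, Real.exp (-s) * ‖h‖ :=
      norm_integral_le_of_norm_le ((integrableOn_exp_neg_Ioi 0).mul_const _) <|
        ae_of_all _ fun s => by
          rw [norm_smul, Real.norm_of_nonneg (Real.exp_pos _).le]
          gcongr
          exact norm_translate_le h _
  _ = ‖h‖ := by rw [integral_mul_const, integral_exp_neg_Ioi_zero, one_mul]

/-- The exponential average `h ↦ ∫₀^∞ e⁻ˢ h(· + γ (k s)) ds` along the flow `γ`. It is the resolvent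
`(1 - k ∂)⁻¹` of the derivative `∂` along `γ`, and a contraction for `k` of either sign. -/
noncomputable def expAverage (γ : ℝ →ₜ+ K) (k : ℝ) : C(K, F) →L[ℝ] C(K, F) :=
  LinearMap.mkContinuous
    { toFun := fun h => ∫ s in Set.Ioi 0, Real.exp (-s) • h.comp (.addRight (γ (k * s)))
      map_add' := fun h₁ h₂ => by
        simp only [ContinuousMap.add_comp, smul_add]
        exact integral_add (integrable_exp_neg_smul_translate γ k h₁)
          (integrable_exp_neg_smul_translate γ k h₂)
      map_smul' := fun c h => by
        simp only [ContinuousMap.smul_comp, smul_comm _ c, integral_smul, RingHom.id_apply] }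
    1 fun h => (norm_integral_exp_neg_smul_translate_le γ k h).trans_eq (one_mul _).symm

lemma norm_expAverage_le (γ : ℝ →ₜ+ K) (k : ℝ) (h : C(K, F)) : ‖expAverage γ k h‖ ≤ ‖h‖ :=
  norm_integral_exp_neg_smul_translate_le γ k h

lemma map_expAverage [CompleteSpace F] [CompleteSpace G] (γ : ℝ →ₜ+ K) (k : ℝ)
    (L : C(K, F) →L[ℝ] G) (h : C(K, F)) :
    L (expAverage γ k h) =
      ∫ s in Set.Ioi 0, Real.exp (-s) • L (h.comp (.addRight (γ (k * s)))) := by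
  simp_rw [← L.map_smul]
  exact (L.integral_comp_comm (integrable_exp_neg_smul_translate γ k h)).symm

variable [CompleteSpace F]

lemma expAverage_apply (γ : ℝ →ₜ+ K) (k : ℝ) (h : C(K, F)) (θ : K) :
    expAverage γ k h θ = ∫ s in Set.Ioi 0, Real.exp (-s) • h (θ + γ (k * s)) :=
  map_expAverage γ k (ContinuousMap.evalCLM ℝ θ) h

lemma expAverage_translate (γ : ℝ →ₜ+ K) (k : ℝ) (h : C(K, F)) (τ : K) :
    expAverage γ k (h.comp (.addRight τ)) = (expAverage γ k h).comp (.addRight τ) := by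
  ext θ
  simp [expAverage_apply, add_right_comm]

lemma expAverage_compLeft [CompleteSpace G] (γ : ℝ →ₜ+ K) (k : ℝ) (L : F →L[ℝ] G) (h : C(K, F)) :
    expAverage γ k (L.compLeftContinuous ℝ K h) = L.compLeftContinuous ℝ K (expAverage γ k h) :=
  (map_expAverage γ k (L.compLeftContinuous ℝ K) h).symm

lemma hasDerivAt_expAverage (γ : ℝ →ₜ+ K) {l : ℝ} (hl : l ≠ 0) (h : C(K, F)) (t : ℝ) :
    HasDerivAt (fun t => expAverage γ l⁻¹ h (γ t))
      (l • (expAverage γ l⁻¹ h (γ t) - h (γ t))) t := by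
  have along (t : ℝ) : expAverage γ l⁻¹ h (γ t) =
      ∫ s in Set.Ioi 0, Real.exp (-s) • h (γ (l⁻¹ * (l * t + s))) := by
    simp_rw [expAverage_apply, mul_add, inv_mul_cancel_left₀ hl, map_add]
  have hderiv := hasDerivAt_integral_exp_neg_smul (q := fun s => h (γ (l⁻¹ * s))) (by fun_prop)
    (fun _ => h.norm_coe_le_norm _) (l * t)
  simp_rw [along]
  simpa [Function.comp_def, inv_mul_cancel_left₀ hl] using
    hderiv.scomp t ((hasDerivAt_id t).const_mul l)

end Averaging

section Mean

variable {K F G : Type*} [TopologicalSpace K] [CompactSpace K] [MeasurableSpace K]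
  [NormedAddCommGroup F] [NormedSpace ℝ F] [NormedAddCommGroup G] [NormedSpace ℝ G]
  (μ : Measure K) [IsProbabilityMeasure μ]

lemma norm_integral_le_norm (h : C(K, F)) : ‖∫ θ, h θ ∂μ‖ ≤ ‖h‖ := by
  simpa using norm_integral_le_of_norm_le_const (ae_of_all μ h.norm_coe_le_norm)

variable [BorelSpace K]

lemma integrable_continuousMap {F : Type*} [NormedAddCommGroup F] (h : C(K, F)) :
    Integrable h μ :=
  h.continuous.integrable_of_hasCompactSupport (HasCompactSupport.of_compactSpace h)

/-- The mean value `h ↦ ∫ h ∂μ` as a continuous linear map. -/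
noncomputable def mean : C(K, F) →L[ℝ] F :=
  LinearMap.mkContinuous
    { toFun := fun h => ∫ θ, h θ ∂μ
      map_add' := fun h₁ h₂ =>
        integral_add (integrable_continuousMap μ h₁) (integrable_continuousMap μ h₂)
      map_smul' := fun c h => integral_smul c h }
    1 fun h => (norm_integral_le_norm μ h).trans_eq (one_mul _).symm

lemma mean_apply (h : C(K, F)) : mean μ h = ∫ θ, h θ ∂μ := rfl

lemma norm_mean_le (h : C(K, F)) : ‖mean μ h‖ ≤ ‖h‖ := norm_integral_le_norm μ h

lemma mean_const [CompleteSpace F] (c : F) : mean μ (.const K c) = c := by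
  simp [mean_apply]

lemma mean_compLeft [CompleteSpace F] [CompleteSpace G] (L : F →L[ℝ] G) (h : C(K, F)) :
    mean μ (L.compLeftContinuous ℝ K h) = L (mean μ h) :=
  L.integral_comp_comm (integrable_continuousMap μ h)

/-- The projection `h ↦ h - mean h` onto the functions of mean value zero. -/
noncomputable def meanFree : C(K, F) →L[ℝ] C(K, F) :=
  .id ℝ _ - ContinuousLinearMap.const ℝ K ∘L mean μ

lemma meanFree_apply (h : C(K, F)) (θ : K) : meanFree μ h θ = h θ - mean μ h := rfl

lemma norm_meanFree_le (h : C(K, F)) : ‖meanFree μ h‖ ≤ 2 * ‖h‖ := by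
  refine (ContinuousMap.norm_le _ (by positivity)).2 fun θ => ?_
  calc ‖h θ - mean μ h‖ ≤ ‖h θ‖ + ‖mean μ h‖ := norm_sub_le _ _
    _ ≤ ‖h‖ + ‖h‖ := add_le_add (h.norm_coe_le_norm θ) (norm_mean_le μ h)
    _ = 2 * ‖h‖ := (two_mul _).symm

lemma meanFree_const [CompleteSpace F] (c : F) : meanFree μ (.const K c) = 0 := by
  ext θ
  simp [meanFree_apply, mean_const]

lemma mean_meanFree [CompleteSpace F] (h : C(K, F)) : mean μ (meanFree μ h) = 0 := by
  have : meanFree μ h = h - .const K (mean μ h) := rfl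
  rw [this, map_sub, mean_const, sub_self]

lemma meanFree_compLeft [CompleteSpace F] [CompleteSpace G] (L : F →L[ℝ] G) (h : C(K, F)) :
    meanFree μ (L.compLeftContinuous ℝ K h) = L.compLeftContinuous ℝ K (meanFree μ h) := by
  ext θ
  change L (h θ) - mean μ (L.compLeftContinuous ℝ K h) = L (h θ - mean μ h)
  rw [mean_compLeft, map_sub]

variable [AddCommGroup K] [IsTopologicalAddGroup K] [μ.IsAddRightInvariant]

lemma mean_translate (h : C(K, F)) (τ : K) : mean μ (h.comp (.addRight τ)) = mean μ h :=
  integral_add_right_eq_self h τ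

lemma meanFree_translate (h : C(K, F)) (τ : K) :
    meanFree μ (h.comp (.addRight τ)) = (meanFree μ h).comp (.addRight τ) := by
  ext θ
  simp [meanFree_apply, mean_translate]

lemma mean_expAverage [CompleteSpace F] (γ : ℝ →ₜ+ K) (k : ℝ) (h : C(K, F)) :
    mean μ (expAverage γ k h) = mean μ h := by
  simp_rw [map_expAverage, mean_translate, integral_smul_const, integral_exp_neg_Ioi_zero, one_smul]

end Mean

section RangeOperator

variable {K F G : Type*} [TopologicalSpace K] [CompactSpace K] [AddCommGroup K]
  [IsTopologicalAddGroup K] [MeasurableSpace K] [BorelSpace K]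
  [NormedAddCommGroup F] [NormedSpace ℝ F] [NormedAddCommGroup G] [NormedSpace ℝ G]
  (γ : ℝ →ₜ+ K) (μ : Measure K) [IsProbabilityMeasure μ] (a ε : ℝ)

/-- The two roots `l` of the characteristic equation `ε l² + l + ε a = 0`; they are real when
`4 ε² a ≤ 1`. -/
noncomputable def charRoots : ℝ × ℝ :=
  ((-1 + √(1 - 4 * ε ^ 2 * a)) / (2 * ε), (-1 - √(1 - 4 * ε ^ 2 * a)) / (2 * ε))

variable {a ε} in
lemma charRoots_sum (hε : ε ≠ 0) : (charRoots a ε).1 + (charRoots a ε).2 = -ε⁻¹ := by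
  simp only [charRoots]
  field_simp
  ring

variable {a ε} in
lemma charRoots_prod (hε : ε ≠ 0) (hεa : 4 * ε ^ 2 * a ≤ 1) :
    (charRoots a ε).1 * (charRoots a ε).2 = a := by
  have hsq := Real.sq_sqrt (sub_nonneg.2 hεa)
  simp only [charRoots]
  field_simp
  linear_combination -hsq

/-- The solution operator of `ε (y'' + a y) + y' = ε (h - mean h)` among functions of mean value
zero, where the prime is the derivative along the flow `γ`. Since the left side factors as
`ε (l₁ - ∂) (l₂ - ∂)` over the characteristic roots, and `l₁ l₂ = a`, it is a product of exponential
averages. At `ε = 0` it is set to zero, its strong limit for a nonresonant flow. -/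
noncomputable def rangeOp : C(K, F) →L[ℝ] C(K, F) :=
  if ε = 0 then 0
  else a⁻¹ • (expAverage γ (charRoots a ε).1⁻¹ ∘L expAverage γ (charRoots a ε).2⁻¹ ∘L meanFree μ)

lemma rangeOp_zero : (rangeOp γ μ a 0 : C(K, F) →L[ℝ] C(K, F)) = 0 := if_pos rfl

variable {ε} in
lemma rangeOp_apply (hε : ε ≠ 0) (h : C(K, F)) :
    rangeOp γ μ a ε h =
      a⁻¹ • expAverage γ (charRoots a ε).1⁻¹ (expAverage γ (charRoots a ε).2⁻¹ (meanFree μ h)) := by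
  rw [rangeOp, if_neg hε]
  rfl

lemma norm_rangeOp_le : ‖(rangeOp γ μ a ε : C(K, F) →L[ℝ] C(K, F))‖ ≤ 2 / |a| := by
  obtain rfl | hε := eq_or_ne ε 0
  · rw [rangeOp_zero, norm_zero]
    positivity
  refine ContinuousLinearMap.opNorm_le_bound _ (by positivity) fun h => ?_
  rw [rangeOp_apply γ μ a hε, norm_smul, norm_inv, Real.norm_eq_abs, div_eq_inv_mul, mul_assoc]
  gcongr
  exact (norm_expAverage_le _ _ _).trans ((norm_expAverage_le _ _ _).trans (norm_meanFree_le μ h))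

variable [CompleteSpace F]

lemma rangeOp_const (c : F) : rangeOp γ μ a ε (.const K c) = 0 := by
  obtain rfl | hε := eq_or_ne ε 0
  · simp [rangeOp_zero]
  · simp [rangeOp_apply γ μ a hε, meanFree_const]

lemma rangeOp_compLeft [CompleteSpace G] (L : F →L[ℝ] G) (h : C(K, F)) :
    rangeOp γ μ a ε (L.compLeftContinuous ℝ K h) =
      L.compLeftContinuous ℝ K (rangeOp γ μ a ε h) := by
  obtain rfl | hε := eq_or_ne ε 0
  · simp [rangeOp_zero]
  · simp only [rangeOp_apply γ μ a hε, meanFree_compLeft, expAverage_compLeft, map_smul]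

variable {a ε} in
lemma exists_hasDerivAt_rangeOp (ha : a ≠ 0) (hε : ε ≠ 0) (hεa : 4 * ε ^ 2 * a ≤ 1) (h : C(K, F)) :
    ∃ y' : ℝ → F, (∀ t, HasDerivAt (fun t => rangeOp γ μ a ε h (γ t)) (y' t) t) ∧
      ∀ t, HasDerivAt y' (h (γ t) - mean μ h - a • rangeOp γ μ a ε h (γ t) - ε⁻¹ • y' t) t := by
  have hsum := charRoots_sum (a := a) hε
  have hprod := charRoots_prod hε hεa
  have hroot := mul_ne_zero_iff.1 (hprod ▸ ha)
  rw [rangeOp_apply γ μ a hε]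
  set l₁ := (charRoots a ε).1
  set l₂ := (charRoots a ε).2
  set v := expAverage γ l₂⁻¹ (meanFree μ h)
  set w := expAverage γ l₁⁻¹ v
  have hw := hasDerivAt_expAverage γ hroot.1 v
  have hv := hasDerivAt_expAverage γ hroot.2 (meanFree μ h)
  refine ⟨fun t => a⁻¹ • l₁ • (w (γ t) - v (γ t)), fun t => (hw t).const_smul a⁻¹, fun t => ?_⟩
  refine ((((hw t).sub (hv t)).const_smul l₁).const_smul a⁻¹).congr_deriv ?_
  rw [← neg_eq_iff_eq_neg] at hsum
  rw [meanFree_apply, ← hsum, ← hprod, ContinuousMap.smul_apply]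
  have := hroot.1
  have := hroot.2
  match_scalars <;> field_simp <;> ring

variable [μ.IsAddRightInvariant]

lemma mean_rangeOp (h : C(K, F)) : mean μ (rangeOp γ μ a ε h) = 0 := by
  obtain rfl | hε := eq_or_ne ε 0
  · simp [rangeOp_zero]
  · rw [rangeOp_apply γ μ a hε, map_smul, mean_expAverage, mean_expAverage, mean_meanFree,
      smul_zero]

lemma rangeOp_translate (h : C(K, F)) (τ : K) :
    rangeOp γ μ a ε (h.comp (.addRight τ)) = (rangeOp γ μ a ε h).comp (.addRight τ) := by
  obtain rfl | hε := eq_or_ne ε 0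
  · simp [rangeOp_zero]
  · simp only [rangeOp_apply γ μ a hε, meanFree_translate, expAverage_translate,
      ContinuousMap.smul_comp]

end RangeOperator

section Eigenfunctions

variable {K : Type*} [TopologicalSpace K] [AddCommGroup K] [IsTopologicalAddGroup K]
  {γ : ℝ →ₜ+ K} {σ : ℝ} {h : C(K, ℂ)}

/-- `h` is an eigenfunction of the flow `γ` with frequency `σ`: it is multiplied by `e^{iσs}` when
it is translated by `γ s`. -/
def IsFlowEigenfunction (γ : ℝ →ₜ+ K) (σ : ℝ) (h : C(K, ℂ)) : Prop :=
  ∀ s : ℝ, h.comp (.addRight (γ s)) = Complex.exp (Complex.I * σ * s) • h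

lemma IsFlowEigenfunction.const_smul (hh : IsFlowEigenfunction γ σ h) (c : ℂ) :
    IsFlowEigenfunction γ σ (c • h) := fun s => by
  rw [ContinuousMap.smul_comp, hh s, smul_comm]

variable [CompactSpace K]

lemma IsFlowEigenfunction.expAverage_eq_smul (hh : IsFlowEigenfunction γ σ h) (k : ℝ) :
    expAverage γ k h = (1 - Complex.I * k * σ)⁻¹ • h := by
  have hre : (Complex.I * k * σ - 1).re < 0 := by simp
  have hexp (s : ℝ) : Real.exp (-s) • h.comp (.addRight (γ (k * s))) =
      Complex.exp ((Complex.I * k * σ - 1) * s) • h := by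
    rw [hh, ← Complex.coe_smul, smul_smul, Complex.ofReal_exp, ← Complex.exp_add]
    congr 2
    push_cast
    ring
  calc expAverage γ k h
      = ∫ s in Set.Ioi (0 : ℝ), Complex.exp ((Complex.I * k * σ - 1) * s) • h :=
        integral_congr_ae (ae_of_all _ hexp)
    _ = _ := by
        rw [integral_smul_const, integral_exp_mul_complex_Ioi hre, Complex.ofReal_zero, mul_zero,
          Complex.exp_zero, ← neg_sub 1 (_ * _), div_neg, neg_div, neg_neg, one_div]

variable [MeasurableSpace K] [BorelSpace K] {μ : Measure K} [IsProbabilityMeasure μ]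
  [μ.IsAddRightInvariant] {a ε : ℝ}

lemma IsFlowEigenfunction.mean_eq_zero (hh : IsFlowEigenfunction γ σ h) (hσ : σ ≠ 0) :
    mean μ h = 0 := by
  have hσ' : (σ : ℂ) ≠ 0 := Complex.ofReal_ne_zero.2 hσ
  have hhalf := hh (Real.pi / σ)
  rw [show Complex.I * σ * (Real.pi / σ : ℝ) = Real.pi * Complex.I by push_cast; field_simp,
    Complex.exp_pi_mul_I, neg_one_smul] at hhalf
  have hneg := mean_translate μ h (γ (Real.pi / σ))
  rwa [hhalf, map_neg, neg_eq_self] at hneg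

lemma I_mul_add_mul_sub_sq_ne_zero (hσ : σ ≠ 0) (a ε : ℝ) :
    Complex.I * σ + ε * (a - σ ^ 2) ≠ 0 := by
  intro hzero
  have him := congrArg Complex.im hzero
  norm_cast at him
  rw [Complex.add_im, Complex.ofReal_im, add_zero, Complex.I_mul_im, Complex.ofReal_re] at him
  exact hσ him

lemma IsFlowEigenfunction.rangeOp_eq_smul (hh : IsFlowEigenfunction γ σ h) (hσ : σ ≠ 0) (ha : a ≠ 0)
    (hεa : 4 * ε ^ 2 * a ≤ 1) :
    rangeOp γ μ a ε h = (ε / (Complex.I * σ + ε * (a - σ ^ 2)) : ℂ) • h := by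
  obtain rfl | hε := eq_or_ne ε 0
  · simp [rangeOp_zero]
  have hsum : ((charRoots a ε).1 + (charRoots a ε).2 : ℂ) = -(ε : ℂ)⁻¹ := by
    exact_mod_cast charRoots_sum (a := a) hε
  have hprod := charRoots_prod hε hεa
  have hroot := mul_ne_zero_iff.1 (hprod ▸ ha)
  have hfree : meanFree μ h = h := by
    ext θ
    rw [meanFree_apply, hh.mean_eq_zero hσ, sub_zero]
  rw [rangeOp_apply γ μ a hε, hfree, hh.expAverage_eq_smul, (hh.const_smul _).expAverage_eq_smul,
    ← Complex.coe_smul, smul_smul, smul_smul]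
  congr 1
  have hprod' : ((charRoots a ε).1 * (charRoots a ε).2 : ℂ) = a := by exact_mod_cast hprod
  have hε' : (ε : ℂ) ≠ 0 := Complex.ofReal_ne_zero.2 hε
  have hl₁ : ((charRoots a ε).1 : ℂ) ≠ 0 := Complex.ofReal_ne_zero.2 hroot.1
  have hl₂ : ((charRoots a ε).2 : ℂ) ≠ 0 := Complex.ofReal_ne_zero.2 hroot.2
  have hfactor : (Complex.I * σ + ε * (a - (σ : ℂ) ^ 2)) = ε * (a *
      ((1 - Complex.I * ((charRoots a ε).1⁻¹ : ℝ) * σ) *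
        (1 - Complex.I * ((charRoots a ε).2⁻¹ : ℝ) * σ))) := by
    push_cast
    field_simp at hsum
    rw [← hprod']
    field_simp
    linear_combination (Complex.I * σ) * hsum - (ε * (σ : ℂ) ^ 2) * Complex.I_sq
  rw [hfactor, div_mul_eq_div_div, div_self hε', one_div, mul_inv, mul_inv, Complex.ofReal_inv,
    mul_assoc]

lemma IsFlowEigenfunction.continuousOn_rangeOp (hh : IsFlowEigenfunction γ σ h) (hσ : σ ≠ 0)
    (ha : a ≠ 0) :
    ContinuousOn (fun ε => rangeOp γ μ a ε h) {ε | 4 * ε ^ 2 * a ≤ 1} := by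
  refine ContinuousOn.congr (f := fun ε : ℝ => (ε / (Complex.I * σ + ε * (a - σ ^ 2)) : ℂ) • h)
    (Continuous.continuousOn ?_) fun ε hε => hh.rangeOp_eq_smul hσ ha hε
  have hden := I_mul_add_mul_sub_sq_ne_zero hσ a
  fun_prop (disch := exact hden _)

end Eigenfunctions

section StrongContinuity

lemma isClosed_setOf_continuousOn_of_equicontinuous {X Y Z : Type*} [TopologicalSpace X]
    [TopologicalSpace Y] [UniformSpace Z] {B : X → Y → Z} (hB : Equicontinuous B) (s : Set X) :
    IsClosed {y | ContinuousOn (fun x => B x y) s} := by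
  refine isClosed_iff_frequently.2 fun y hy =>
    continuousOn_of_uniform_approx_of_continuousOn fun u hu => ?_
  obtain ⟨z, hz, hyz⟩ := (hy.and_eventually (hB y u hu)).exists
  exact ⟨fun x => B x z, hz, fun x _ => hyz x⟩

variable {ι : Type*}

/-- The linear flow `t ↦ t ω` on the torus. -/
noncomputable def torusFlow (ω : ι → ℝ) : ℝ →ₜ+ UnitAddTorus ι :=
  (torusProj ι).comp ⟨(LinearMap.toSpanSingleton ℝ (ι → ℝ) ω).toAddMonoidHom,
    continuous_id.smul continuous_const⟩

lemma torusFlow_apply (ω : ι → ℝ) (t : ℝ) : torusFlow ω t = torusProj ι (t • ω) := rfl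

variable [Fintype ι]

lemma isFlowEigenfunction_mFourier (ω : ι → ℝ) (ν : ι → ℤ) :
    IsFlowEigenfunction (torusFlow ω) (∑ i, ω i * ν i) (UnitAddTorus.mFourier ν) := by
  intro s
  ext θ
  have hcoord (i : ι) : fourier (ν i) ((θ + torusFlow ω s) i) =
      Complex.exp (Complex.I * (ω i * ν i : ℝ) * s) * fourier (ν i) (θ i) := by
    rw [Pi.add_apply, fourier_apply, smul_add, AddCircle.toCircle_add, Circle.coe_mul, mul_comm,
      ← fourier_apply, ← fourier_apply, torusFlow_apply, torusProj_apply, fourier_coe_apply]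
    congr 2
    simp only [Pi.smul_apply, smul_eq_mul]
    push_cast
    field_simp
  calc UnitAddTorus.mFourier ν (θ + torusFlow ω s)
      = ∏ i, Complex.exp (Complex.I * (ω i * ν i : ℝ) * s) * fourier (ν i) (θ i) :=
        Finset.prod_congr rfl fun i _ => hcoord i
    _ = _ := by
        rw [Finset.prod_mul_distrib, ← Complex.exp_sum, ← Finset.sum_mul, ← Finset.mul_sum,
          Complex.ofReal_sum]
        rfl

/-- The frequency vector `ω` satisfies no integer relation `ω · ν = 0` with `ν ≠ 0`. -/
def Nonresonant (ω : ι → ℝ) : Prop := ∀ ν : ι → ℤ, ν ≠ 0 → ∑ i, ω i * (ν i : ℝ) ≠ 0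

variable {ω : ι → ℝ} {a : ℝ}

lemma continuousOn_rangeOp_smul_mFourier (hω : Nonresonant ω) (ha : a ≠ 0)
    (c : ℂ) (ν : ι → ℤ) :
    ContinuousOn
      (fun ε => rangeOp (torusFlow ω) (torusHaar ι) a ε (c • UnitAddTorus.mFourier ν))
      {ε | 4 * ε ^ 2 * a ≤ 1} := by
  obtain rfl | hν := eq_or_ne ν 0
  · have hconst : c • UnitAddTorus.mFourier (0 : ι → ℤ) = .const (UnitAddTorus ι) c := by
      ext θ
      simp [UnitAddTorus.mFourier_zero]
    simp_rw [hconst, rangeOp_const]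
    exact continuousOn_const
  · exact ((isFlowEigenfunction_mFourier ω ν).const_smul c).continuousOn_rangeOp (hω ν hν) ha

lemma continuousOn_rangeOp_complex (hω : Nonresonant ω) (ha : a ≠ 0)
    (h : C(UnitAddTorus ι, ℂ)) :
    ContinuousOn (fun ε => rangeOp (torusFlow ω) (torusHaar ι) a ε h) {ε | 4 * ε ^ 2 * a ≤ 1} := by
  let B (ε : ℝ) : C(UnitAddTorus ι, ℂ) →L[ℝ] C(UnitAddTorus ι, ℂ) :=
    rangeOp (torusFlow ω) (torusHaar ι) a ε
  have hlip (ε : ℝ) : LipschitzWith ⟨2 / |a|, by positivity⟩ (B ε) :=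
    (B ε).lipschitz.weaken (norm_rangeOp_le _ _ a ε)
  have hclosed := isClosed_setOf_continuousOn_of_equicontinuous
    (LipschitzWith.uniformEquicontinuous _ _ hlip).equicontinuous {ε | 4 * ε ^ 2 * a ≤ 1}
  have hspan : (Submodule.span ℂ (Set.range (UnitAddTorus.mFourier (d := ι))) : Set _) ⊆
      {h | ContinuousOn (fun ε => B ε h) {ε | 4 * ε ^ 2 * a ≤ 1}} := by
    intro h hh
    induction hh using Submodule.closure_induction with
    | zero => simpa using continuousOn_const
    | add x y _ _ hx hy => simpa using hx.fun_add hy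
    | smul_mem c x hx =>
      obtain ⟨ν, rfl⟩ := hx
      exact continuousOn_rangeOp_smul_mFourier hω ha c ν
  have hdense : h ∈ closure (Submodule.span ℂ (Set.range (UnitAddTorus.mFourier (d := ι))) :
      Set C(UnitAddTorus ι, ℂ)) := by
    rw [← Submodule.topologicalClosure_coe, UnitAddTorus.span_mFourier_closure_eq_top]
    trivial
  exact closure_minimal hspan hclosed hdense

lemma continuousOn_rangeOp (hω : Nonresonant ω) (ha : a ≠ 0)
    (h : C(UnitAddTorus ι, ℝ)) :
    ContinuousOn (fun ε => rangeOp (torusFlow ω) (torusHaar ι) a ε h) {ε | 4 * ε ^ 2 * a ≤ 1} := by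
  have hre (ε : ℝ) : rangeOp (torusFlow ω) (torusHaar ι) a ε h =
      Complex.reCLM.compLeftContinuous ℝ _ (rangeOp (torusFlow ω) (torusHaar ι) a ε
        (Complex.ofRealCLM.compLeftContinuous ℝ _ h)) := by
    rw [rangeOp_compLeft]
    rfl
  simp_rw [hre]
  exact (ContinuousLinearMap.continuous _).comp_continuousOn (continuousOn_rangeOp_complex hω ha _)

end StrongContinuity

section Contractions

lemma continuousOn_of_isFixedPt {X Y : Type*} [TopologicalSpace X] [MetricSpace Y]
    {T : X → Y → Y} {k : NNReal} (hT : ∀ x, ContractingWith k (T x)) {u : X → Y}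
    (hu : ∀ x, Function.IsFixedPt (T x) (u x)) {s : Set X}
    (hcont : ∀ y, ContinuousOn (fun x => T x y) s) : ContinuousOn u s := by
  intro x₀ hx₀
  have hdist : Tendsto (fun x => dist (u x₀) (T x (u x₀)) / (1 - k)) (𝓝[s] x₀) (𝓝 0) := by
    have := (tendsto_const_nhds (x := u x₀)).dist (hcont (u x₀) x₀ hx₀) |>.div_const (1 - k : ℝ)
    simpa only [(hu x₀).eq, dist_self, zero_div] using this
  rw [ContinuousWithinAt, tendsto_iff_dist_tendsto_zero]
  refine squeeze_zero (fun _ => dist_nonneg) (fun x => ?_) hdist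
  rw [dist_comm]
  exact (hT x).dist_le_of_fixedPoint (u x₀) (hu x)

variable {X E F : Type*} [NormedAddCommGroup X] [NormedSpace ℝ X] [NormedAddCommGroup E]
  [NormedSpace ℝ E] [CompleteSpace E] [NormedAddCommGroup F] [NormedSpace ℝ F]

lemma analyticAt_of_analyticAt_comp {Ψ : E → F} {v : X → E} {x₀ : X} {e' : E ≃L[ℝ] F}
    (hΨ : AnalyticAt ℝ Ψ (v x₀)) (hderiv : HasFDerivAt Ψ (e' : E →L[ℝ] F) (v x₀))
    (hv : ContinuousAt v x₀) (hΨv : AnalyticAt ℝ (fun x => Ψ (v x)) x₀) : AnalyticAt ℝ v x₀ := by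
  have hstrict : HasStrictFDerivAt Ψ (e' : E →L[ℝ] F) (v x₀) :=
    hderiv.fderiv ▸ hΨ.hasStrictFDerivAt
  let e := hstrict.toOpenPartialHomeomorph Ψ
  have hmem : v x₀ ∈ e.source := hstrict.mem_toOpenPartialHomeomorph_source
  have hsymm : AnalyticAt ℝ e.symm (Ψ (v x₀)) := e.analyticAt_symm' hmem hΨ hderiv.fderiv
  refine (AnalyticAt.comp_of_eq hsymm hΨv rfl).congr ?_
  filter_upwards [hv (e.open_source.mem_nhds hmem)] with x hx using e.left_inv hx

lemma analyticAt_of_analyticAt_sub_contraction {T : E → E} {k : NNReal} (hT : ContractingWith k T)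
    {v : X → E} {x₀ : X} (hTv : AnalyticAt ℝ T (v x₀)) (hv : ContinuousAt v x₀)
    (hsub : AnalyticAt ℝ (fun x => v x - T (v x)) x₀) : AnalyticAt ℝ v x₀ := by
  have hnorm : ‖fderiv ℝ T (v x₀)‖ < 1 :=
    (norm_fderiv_le_of_lipschitz ℝ hT.toLipschitzWith).trans_lt hT.1
  refine analyticAt_of_analyticAt_comp (Ψ := fun y => y - T y)
    (e' := ContinuousLinearEquiv.unitsEquiv ℝ E (Units.oneSub (fderiv ℝ T (v x₀)) hnorm))
    (analyticAt_id.sub hTv) ?_ hv hsub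
  exact (hasFDerivAt_id _).sub hTv.differentiableAt.hasFDerivAt

end Contractions

section LipschitzExtension

lemma exists_lipschitzWith_eventuallyEq {E : Type*} [NormedAddCommGroup E] [NormedSpace ℝ E]
    {f : E → ℝ} {f' : E →L[ℝ] ℝ} {x : E} (hf : HasStrictFDerivAt f f' x) {k : NNReal}
    (hk : ‖f'‖₊ < k) : ∃ n : E → ℝ, LipschitzWith k n ∧ f =ᶠ[𝓝 x] n := by
  obtain ⟨s, hs, hlip⟩ := hf.exists_lipschitzOnWith_of_nnnorm_lt k hk
  obtain ⟨n, hn, heq⟩ := hlip.extend_real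
  exact ⟨n, hn, heq.eventuallyEq_of_mem hs⟩

lemma exists_lipschitz_remainder {g : ℝ → ℝ} {c : ℝ} (hg : AnalyticAt ℝ g c) {k : NNReal}
    (hk : 0 < k) : ∃ n : C(ℝ, ℝ), LipschitzWith k n ∧
      ∀ᶠ x in 𝓝 0, AnalyticAt ℝ n x ∧ n x = g (c + x) - deriv g c * x := by
  have hanalytic : AnalyticAt ℝ (fun x => g (c + x) - deriv g c * x) 0 :=
    (AnalyticAt.comp_of_eq hg (analyticAt_const.add analyticAt_id) (add_zero c)).sub
      (analyticAt_const.mul analyticAt_id)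
  have hderiv : HasDerivAt (fun x => g (c + x) - deriv g c * x) 0 0 := by
    have hshift : HasDerivAt (fun x => g (c + x)) (deriv g c) 0 :=
      HasDerivAt.comp_const_add c 0 (by simpa using hg.differentiableAt.hasDerivAt)
    simpa using hshift.fun_sub ((hasDerivAt_id (0 : ℝ)).const_mul (deriv g c))
  obtain ⟨n, hn, heq⟩ := exists_lipschitzWith_eventuallyEq hanalytic.hasStrictFDerivAt
    (k := k) (by simpa [hderiv.hasFDerivAt.fderiv] using hk)
  refine ⟨⟨n, hn.continuous⟩, hn, ?_⟩
  filter_upwards [(hanalytic.congr heq).eventually_analyticAt, heq] with x hx hxn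
    using ⟨hx, hxn.symm⟩

end LipschitzExtension

section RangeMap

variable {K : Type*} [TopologicalSpace K] [CompactSpace K] [AddCommGroup K]
  [IsTopologicalAddGroup K] [MeasurableSpace K] [BorelSpace K]
  (γ : ℝ →ₜ+ K) (μ : Measure K) [IsProbabilityMeasure μ] (a : ℝ) (n : C(ℝ, ℝ)) (F : C(K, ℝ))
  (ε ζ : ℝ)

/-- The forcing term `F - n (ζ + u)` of the linearized equation. -/
def forcing {K : Type*} [TopologicalSpace K] (n : C(ℝ, ℝ)) (F : C(K, ℝ)) (ζ : ℝ) (u : C(K, ℝ)) :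
    C(K, ℝ) :=
  F - n.comp (.const K ζ + u)

/-- The map whose fixed points are the mean-free solutions `u` of
`ε (u'' + a u) + u' = ε (h - mean h)`, where `h` is the forcing at `u`. -/
noncomputable def rangeMap (u : C(K, ℝ)) : C(K, ℝ) :=
  rangeOp γ μ a ε (forcing n F ζ u)

variable {a n} in
lemma contractingWith_rangeMap (ha : a ≠ 0) (hn : LipschitzWith (‖a‖₊ / 4) n) :
    ContractingWith 2⁻¹ (rangeMap γ μ a n F ε ζ) := by
  refine ⟨two_inv_lt_one, LipschitzWith.of_dist_le_mul fun u v => ?_⟩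
  calc dist (rangeMap γ μ a n F ε ζ u) (rangeMap γ μ a n F ε ζ v)
      ≤ 2 / |a| * dist (n.comp (.const K ζ + u)) (n.comp (.const K ζ + v)) := by
        rw [rangeMap, rangeMap, forcing, forcing, dist_eq_norm, ← map_sub,
          ← dist_sub_left F, dist_eq_norm]
        exact ContinuousLinearMap.le_of_opNorm_le _ (norm_rangeOp_le γ μ a ε) _
    _ ≤ 2 / |a| * (‖a‖₊ / 4 * dist u v) := by
        gcongr
        simpa using (lipschitzWith_comp (K := K) hn).dist_le_mul (.const K ζ + u) (.const K ζ + v)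
    _ = (2⁻¹ : NNReal) * dist u v := by
        have := abs_pos.2 ha
        simp only [coe_nnnorm, Real.norm_eq_abs, NNReal.coe_inv, NNReal.coe_ofNat]
        field_simp
        norm_num

variable {γ μ a n F ε ζ} {u : C(K, ℝ)}

lemma norm_le_of_isFixedPt_rangeMap (ha : a ≠ 0) (hn : LipschitzWith (‖a‖₊ / 4) n)
    (hu : Function.IsFixedPt (rangeMap γ μ a n F ε ζ) u) : ‖u‖ ≤ 2 * ‖rangeOp γ μ a ε F‖ := by
  have hzero : rangeMap γ μ a n F ε ζ 0 = rangeOp γ μ a ε F := by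
    have : n.comp (.const K ζ + 0) = .const K (n ζ) := by
      rw [add_zero]
      rfl
    rw [rangeMap, forcing, this, map_sub, rangeOp_const, sub_zero]
  have hdist := (contractingWith_rangeMap γ μ F ε ζ ha hn).dist_le_of_fixedPoint 0 hu
  rw [hzero, dist_zero_left, dist_zero_left, NNReal.coe_inv, NNReal.coe_ofNat] at hdist
  exact hdist.trans_eq (by ring)

lemma abs_add_lt_of_isFixedPt_rangeMap (ha : a ≠ 0) (hn : LipschitzWith (‖a‖₊ / 4) n)
    (hu : Function.IsFixedPt (rangeMap γ μ a n F ε ζ) u) {ρ : ℝ} (hζ : |ζ| < ρ / 2)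
    (hF : ‖rangeOp γ μ a ε F‖ < ρ / 4) (θ : K) : |ζ + u θ| < ρ := by
  have hθ : |u θ| ≤ ‖u‖ := u.norm_coe_le_norm θ
  linarith [abs_add_le ζ (u θ), norm_le_of_isFixedPt_rangeMap ha hn hu]

lemma mean_eq_zero_of_isFixedPt_rangeMap [μ.IsAddRightInvariant]
    (hu : Function.IsFixedPt (rangeMap γ μ a n F ε ζ) u) : mean μ u = 0 :=
  hu.eq ▸ mean_rangeOp γ μ a ε _

lemma eq_zero_of_isFixedPt_rangeMap_zero (hu : Function.IsFixedPt (rangeMap γ μ a n F 0 ζ) u) :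
    u = 0 := by
  rw [← hu.eq, rangeMap, rangeOp_zero, zero_apply]

lemma range_equation_of_isFixedPt_rangeMap {g : ℝ → ℝ} {c₀ : ℝ} (ha : a ≠ 0) (hε : ε ≠ 0)
    (hεa : 4 * ε ^ 2 * a ≤ 1) (hu : Function.IsFixedPt (rangeMap γ μ a n F ε ζ) u)
    (hg : ∀ θ, n (ζ + u θ) = g (c₀ + (ζ + u θ)) - a * (ζ + u θ)) (t : ℝ) :
    ε * deriv (deriv fun s => c₀ + ζ + u (γ s)) t + deriv (fun s => c₀ + ζ + u (γ s)) t
      + ε * g (c₀ + ζ + u (γ t)) =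
      ε * F (γ t) + ε * (a * ζ - mean μ (forcing n F ζ u)) := by
  obtain ⟨u', hu', hu''⟩ :=
    exists_hasDerivAt_rangeOp γ μ ha hε hεa (forcing n F ζ u)
  change rangeOp γ μ a ε (forcing n F ζ u) = u at hu
  simp only [hu] at hu' hu''
  have hderiv : deriv (fun s => c₀ + ζ + u (γ s)) = u' :=
    funext fun s => ((hu' s).const_add (c₀ + ζ)).deriv
  have hforcing : forcing n F ζ u (γ t) =
      F (γ t) - (g (c₀ + ζ + u (γ t)) - a * (ζ + u (γ t))) := by
    rw [add_assoc, ← hg]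
    rfl
  rw [hderiv, (hu'' t).deriv, hforcing, smul_eq_mul, smul_eq_mul]
  field_simp
  ring

lemma isFixedPt_rangeMap_translate [μ.IsAddRightInvariant]
    (hu : Function.IsFixedPt (rangeMap γ μ a n F ε ζ) u) (τ : K) :
    Function.IsFixedPt (rangeMap γ μ a n (F.comp (.addRight τ)) ε ζ) (u.comp (.addRight τ)) := by
  have := rangeOp_translate γ μ a ε (forcing n F ζ u) τ
  exact this.trans (congrArg (fun v => ContinuousMap.comp v (.addRight τ)) hu.eq)

end RangeMap

section TorusSolution

variable {ι : Type*} [Fintype ι] {ω : ι → ℝ} {a : ℝ} {n : C(ℝ, ℝ)} {F u : C(UnitAddTorus ι, ℝ)}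
  {ε ζ : ℝ}

/- The orbit of `u` under translations is analytic by the analytic inverse function theorem in
`C(T, ℝ)`, because the translates of `u` solve the equation for the translates of `F`. -/
lemma analyticAt_of_isFixedPt_rangeMap (ha : a ≠ 0) (hn : LipschitzWith (‖a‖₊ / 4) n)
    (hnu : ∀ θ, AnalyticAt ℝ n (ζ + u θ))
    (hF : ∀ ψ, AnalyticAt ℝ (fun φ => F (torusProj ι φ)) ψ)
    (hu : Function.IsFixedPt (rangeMap (torusFlow ω) (torusHaar ι) a n F ε ζ) u) (ψ : ι → ℝ) :
    AnalyticAt ℝ (fun φ => u (torusProj ι φ)) ψ := by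
  let B : C(UnitAddTorus ι, ℝ) →L[ℝ] C(UnitAddTorus ι, ℝ) :=
    rangeOp (torusFlow ω) (torusHaar ι) a ε
  let T := rangeMap (torusFlow ω) (torusHaar ι) a n 0 ε ζ
  let orbit (φ : ι → ℝ) := u.comp (.addRight (torusProj ι φ))
  have hT : AnalyticAt ℝ T (orbit ψ) := by
    have hcomp : AnalyticAt ℝ (fun v => n.comp v) (.const _ ζ + orbit ψ) :=
      analyticAt_comp fun θ => hnu _
    exact (B.analyticAt _).comp (analyticAt_const.sub
      (hcomp.comp (analyticAt_const.add analyticAt_id)))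
  have horbit_sub (φ : ι → ℝ) : orbit φ - T (orbit φ) = B (F.comp (.addRight (torusProj ι φ))) := by
    have hfix := (isFixedPt_rangeMap_translate hu (torusProj ι φ)).eq
    rw [sub_eq_iff_eq_add]
    refine hfix.symm.trans ?_
    rw [rangeMap, forcing, sub_eq_add_neg, map_add, ← zero_sub]
    rfl
  have horbit : AnalyticAt ℝ orbit ψ := by
    refine analyticAt_of_analyticAt_sub_contraction
      (contractingWith_rangeMap _ _ 0 ε ζ ha hn) hT ?_ ?_
    · exact ((continuous_translate u).comp (torusProj ι).continuous).continuousAt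
    · simp_rw [horbit_sub]
      exact (B.analyticAt _).comp (analyticAt_translate hF ψ)
  have heval := ((ContinuousMap.evalCLM ℝ (0 : UnitAddTorus ι)).analyticAt (orbit ψ)).comp horbit
  simpa [orbit, Function.comp_def] using heval

lemma eventually_norm_rangeOp_lt (hω : Nonresonant ω) (ha : a ≠ 0) (F : C(UnitAddTorus ι, ℝ))
    {δ : ℝ} (hδ : 0 < δ) : ∀ᶠ ε in 𝓝 0,
      4 * ε ^ 2 * a ≤ 1 ∧ ‖rangeOp (torusFlow ω) (torusHaar ι) a ε F‖ < δ := by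
  have hnhds : ∀ᶠ ε : ℝ in 𝓝 0, 4 * ε ^ 2 * a ≤ 1 :=
    (Continuous.tendsto' (by fun_prop) _ 0 (by simp)).eventually_le_const one_pos
  have hcont : ContinuousAt (fun ε => ‖rangeOp (torusFlow ω) (torusHaar ι) a ε F‖) 0 :=
    ((continuousOn_rangeOp hω ha F).continuousAt hnhds).norm
  exact hnhds.and (hcont.eventually_lt continuousAt_const (by simpa [rangeOp_zero] using hδ))

lemma tendstoUniformly_of_isFixedPt_rangeMap (hω : Nonresonant ω) (ha : a ≠ 0)
    (hn : LipschitzWith (‖a‖₊ / 4) n) {U : ℝ → C(UnitAddTorus ι, ℝ)}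
    (hU : ∀ ε, Function.IsFixedPt (rangeMap (torusFlow ω) (torusHaar ι) a n F ε ζ) (U ε))
    {s : Set ℝ} (hs : ∀ ε ∈ s, 4 * ε ^ 2 * a ≤ 1) {ε₁ : ℝ} (hε₁ : ε₁ ∈ s) :
    TendstoUniformly (fun ε => U ε) (U ε₁) (𝓝[s] ε₁) := by
  have hcont : ContinuousOn U s :=
    continuousOn_of_isFixedPt (fun ε => contractingWith_rangeMap _ _ F ε ζ ha hn) hU
      fun u => (continuousOn_rangeOp hω ha (forcing n F ζ u)).mono hs
  exact ContinuousMap.tendsto_iff_tendstoUniformly.1 (hcont ε₁ hε₁)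

end TorusSolution

end RangeEquation

open RangeEquation in
theorem range_equation_solvable_continuous_general {ι : Type*} [Fintype ι] [DecidableEq ι]
    {ω : ι → ℝ} (hω : Nonresonant ω) {f : (ι → ℝ) → ℝ} (hf : ∀ ψ, AnalyticAt ℝ f ψ)
    (hfper : ∀ ψ i, f (ψ + Pi.single i (2 * Real.pi)) = f ψ)
    {g : ℝ → ℝ} {c₀ : ℝ} (hg : AnalyticAt ℝ g c₀) (ha : deriv g c₀ ≠ 0) :
    ∃ εb > (0 : ℝ), ∃ ζb > (0 : ℝ), ∃ (u : ℝ → ℝ → (ι → ℝ) → ℝ) (R : ℝ → ℝ → ℝ),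
      (∀ ε : ℝ, 0 < |ε| → |ε| < εb → ∀ ζ : ℝ, |ζ| < ζb →
        (∀ ψ, AnalyticAt ℝ (u ε ζ) ψ) ∧
        (∀ ψ i, u ε ζ (ψ + Pi.single i (2 * Real.pi)) = u ε ζ ψ) ∧
        (((2 * Real.pi) ^ Fintype.card ι)⁻¹ *
          ∫ ψ in Set.Icc (0 : ι → ℝ) (fun _ => 2 * Real.pi), u ε ζ ψ) = 0 ∧
        ∀ t : ℝ, ε * deriv (deriv (fun s : ℝ => c₀ + ζ + u ε ζ (s • ω))) t
            + deriv (fun s : ℝ => c₀ + ζ + u ε ζ (s • ω)) t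
            + ε * g (c₀ + ζ + u ε ζ (t • ω))
            = ε * f (t • ω) + ε * R ε ζ) ∧
      ∀ ζ : ℝ, |ζ| < ζb → u 0 ζ = 0 ∧
        ∀ ε₁ ∈ Set.Ico (0 : ℝ) εb, TendstoUniformly (fun ε => u ε ζ) (u ε₁ ζ)
          (nhdsWithin ε₁ (Set.Ico (0 : ℝ) εb)) := by
  obtain ⟨F, hF⟩ := exists_torus_lift (AnalyticOnNhd.continuous fun ψ _ => hf ψ) hfper
  obtain ⟨n, hn, hng⟩ := exists_lipschitz_remainder hg (k := ‖deriv g c₀‖₊ / 4)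
    (div_pos (nnnorm_pos.2 ha) four_pos)
  obtain ⟨ρ, hρ, hnρ⟩ := Metric.eventually_nhds_iff.1 hng
  obtain ⟨εb, hεb, hsmall⟩ :=
    Metric.eventually_nhds_iff.1 (eventually_norm_rangeOp_lt hω ha F (δ := ρ / 4) (by positivity))
  simp only [Real.dist_eq, sub_zero] at hnρ hsmall
  have hT (ε ζ : ℝ) := contractingWith_rangeMap (torusFlow ω) (torusHaar ι) F ε ζ ha hn
  let U (ε ζ : ℝ) := (hT ε ζ).fixedPoint
  have hU (ε ζ : ℝ) : Function.IsFixedPt _ (U ε ζ) := (hT ε ζ).fixedPoint_isFixedPt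
  have hUρ {ε ζ : ℝ} (hε : |ε| < εb) (hζ : |ζ| < ρ / 2) (θ : UnitAddTorus ι) :=
    hnρ (abs_add_lt_of_isFixedPt_rangeMap ha hn (hU ε ζ) hζ (hsmall hε).2 θ)
  refine ⟨εb, hεb, ρ / 2, half_pos hρ, fun ε ζ ψ => U ε ζ (torusProj ι ψ),
    fun ε ζ => deriv g c₀ * ζ - mean (torusHaar ι) (forcing n F ζ (U ε ζ)), ?_, ?_⟩
  · intro ε hε₀ hε ζ hζ
    refine ⟨?_, fun ψ i => by simp only [torusProj_add_single], ?_, fun t => ?_⟩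
    · exact analyticAt_of_isFixedPt_rangeMap ha hn (fun θ => (hUρ hε hζ θ).1)
        (by simpa only [hF] using hf) (hU ε ζ)
    · rw [← smul_eq_mul, ← integral_torusHaar]
      exact mean_eq_zero_of_isFixedPt_rangeMap (hU ε ζ)
    · rw [← hF]
      exact range_equation_of_isFixedPt_rangeMap ha (abs_pos.1 hε₀) (hsmall hε).1 (hU ε ζ)
        (fun θ => (hUρ hε hζ θ).2) t
  · intro ζ _
    refine ⟨funext fun ψ => ?_, fun ε₁ hε₁ => ?_⟩
    · exact DFunLike.congr_fun (eq_zero_of_isFixedPt_rangeMap_zero (hU 0 ζ)) (torusProj ι ψ)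
    · have hIco (ε) (hε : ε ∈ Set.Ico 0 εb) := (hsmall ((abs_of_nonneg hε.1).trans_lt hε.2)).1
      exact (tendstoUniformly_of_isFixedPt_rangeMap hω ha hn (hU · ζ) hIco hε₁).comp (torusProj ι)

/-- **Solvability of the range equation together with continuity in `ε` at `ε = 0`.**
In the setting of the range equation (nonresonant `ω`, analytic periodic `f` with mean
`f₀`, analytic `g`, `g(c₀) = f₀`, `g'(c₀) ≠ 0`), the solution `u(·, ε, ζ)` can be chosen
so that, in addition, for every fixed `|ζ| < ζ̄` the map `ε ↦ u(·, ε, ζ)` is continuous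
from `[0, ε̄)` into the bounded continuous functions with the sup norm (expressed here as
uniform convergence `u(·, ε, ζ) → u(·, ε₁, ζ)` as `ε → ε₁` within `[0, ε̄)`), with
`u(·, 0, ζ) = 0`; in particular `sup |u(·, ε, ζ)| → 0` as `ε → 0⁺`. -/
theorem range_equation_solvable_continuous
    (d : ℕ) (hd : 1 ≤ d) (ω : Fin d → ℝ)
    (hω : ∀ ν : Fin d → ℤ, ν ≠ 0 → (∑ i, ω i * (ν i : ℝ)) ≠ 0)
    (f : (Fin d → ℝ) → ℝ) (g : ℝ → ℝ)
    (hf : ∀ ψ : Fin d → ℝ, AnalyticAt ℝ f ψ)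
    (hfper : ∀ (ψ : Fin d → ℝ) (i : Fin d), f (ψ + Pi.single i (2 * Real.pi)) = f ψ)
    (hg : ∀ x : ℝ, AnalyticAt ℝ g x)
    (f₀ : ℝ)
    (hf₀ : f₀ = ((2 * Real.pi) ^ d)⁻¹ *
      ∫ ψ in Set.Icc (0 : Fin d → ℝ) (fun _ => 2 * Real.pi), f ψ)
    (c₀ : ℝ) (hzero : g c₀ = f₀) (ha : deriv g c₀ ≠ 0) :
    ∃ εb > (0 : ℝ), ∃ ζb > (0 : ℝ),
      ∃ (u : ℝ → ℝ → (Fin d → ℝ) → ℝ) (R : ℝ → ℝ → ℝ),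
        (∀ ε : ℝ, 0 < |ε| → |ε| < εb → ∀ ζ : ℝ, |ζ| < ζb →
          (∀ ψ : Fin d → ℝ, AnalyticAt ℝ (u ε ζ) ψ) ∧
          (∀ (ψ : Fin d → ℝ) (i : Fin d),
            u ε ζ (ψ + Pi.single i (2 * Real.pi)) = u ε ζ ψ) ∧
          (((2 * Real.pi) ^ d)⁻¹ *
            ∫ ψ in Set.Icc (0 : Fin d → ℝ) (fun _ => 2 * Real.pi), u ε ζ ψ) = 0 ∧
          (∀ t : ℝ,
            ε * deriv (deriv (fun s : ℝ => c₀ + ζ + u ε ζ (s • ω))) t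
              + deriv (fun s : ℝ => c₀ + ζ + u ε ζ (s • ω)) t
              + ε * g (c₀ + ζ + u ε ζ (t • ω))
              = ε * f (t • ω) + ε * R ε ζ)) ∧
        (∀ ζ : ℝ, |ζ| < ζb →
          u 0 ζ = 0 ∧
          ∀ ε₁ ∈ Set.Ico (0 : ℝ) εb,
            TendstoUniformly (fun ε : ℝ => u ε ζ) (u ε₁ ζ)
              (nhdsWithin ε₁ (Set.Ico (0 : ℝ) εb))) := by
  simpa only [Fintype.card_fin] using
    range_equation_solvable_continuous_general hω hf hfper (hg c₀) ha
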